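/- arXiv:0907.0281 — 6 statements merged into one kernel-verified Lean document; each statement's English description precedes it below -/
import Mathlib

section
/- Let K be an infinite field and P a polynomial function on n×n matrices over K (given by a multivariate polynomial in the n² entries) which is invariant under conjugation, i.e. P(g·A·g⁻¹) = P(A) for all matrices A and all invertible g. Then for every nilpotent matrix A, P(A) = P(0). (Conjugation-invariant polynomial functions are constant on the nilpotent cone; this underlies the fact that the nilpotent cone is contained in the non-semistable locus.) -/
/-!
The closure of the conjugation orbit of a nilpotent matrix contains `0`, and an invariant
polynomial is constant on orbit closures.

Concretely, the kernel flag `ker f ≤ ker f² ≤ ⋯` of a nilpotent endomorphism `f` yields a basis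
with natural-number weights for which `f` strictly lowers the weight
(`exists_basis_weight_of_pow_eq_zero`). In such a basis, with matrix `B`, passing to
`D⁻¹ * B * D` for the diagonal matrix `D` with entries `t ^ w i` multiplies the entry `B i j` by `t ^ (w j - w i)`, a
strictly positive power of `t` wherever `B i j ≠ 0`. So `P` evaluated on the conjugate is a
polynomial in `t`, equal to `P B` for every `t ≠ 0`; as the field is infinite, this polynomial is
constant, and its value at `t = 0` is `P 0` (`eval_eq_eval_zero_of_weight`).
-/

/-- A nilpotent endomorphism has a basis with weights `w` such that it strictly lowers weights:
the weights record the first step of the kernel flag in which a basis vector appears. The basis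
is built by lifting one for the endomorphism induced on `V ⧸ ker f`. -/
theorem exists_basis_weight_of_pow_eq_zero {K : Type*} [Field K] (k : ℕ) :
    ∀ {V : Type*} [AddCommGroup V] [Module K V] [FiniteDimensional K V]
      (f : V →ₗ[K] V), f ^ k = 0 →
      ∃ (ι : Type) (_ : Fintype ι) (b : Module.Basis ι K V) (w : ι → ℕ),
        ∀ i j, b.repr (f (b j)) i ≠ 0 → w i < w j := by
  induction k with
  | zero =>
    intro V _ _ _ f hf
    have hV : Subsingleton V := by
      refine ⟨fun x y => ?_⟩
      have h : ∀ z : V, z = 0 := fun z => by simpa using LinearMap.congr_fun hf z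
      rw [h x, h y]
    exact ⟨Empty, inferInstance, Module.Basis.empty V, fun _ => 0, fun i => i.elim⟩
  | succ k ih =>
    intro V _ _ _ f hf
    have hN : LinearMap.ker f ≤ (LinearMap.ker f).comap f := by
      intro x hx
      simp [LinearMap.mem_ker.1 hx]
    let f' := (LinearMap.ker f).mapQ (LinearMap.ker f) f hN
    have hpow : ∀ (m : ℕ) (v : V), (f' ^ m) ((LinearMap.ker f).mkQ v) =
        (LinearMap.ker f).mkQ ((f ^ m) v) := by
      intro m
      induction m with
      | zero => intro v; simp
      | succ m ihm =>
        intro v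
        rw [pow_succ, pow_succ, Module.End.mul_apply, Module.End.mul_apply, ← ihm]
        rfl
    have hf' : f' ^ k = 0 := by
      ext v
      change (f' ^ k) ((LinearMap.ker f).mkQ v) = 0
      rw [hpow, Submodule.mkQ_apply, Submodule.Quotient.mk_eq_zero, LinearMap.mem_ker,
        ← Module.End.mul_apply, ← pow_succ', hf, LinearMap.zero_apply]
    obtain ⟨ι, _, b', w, hw⟩ := ih f' hf'
    let b₀ := Module.finBasis K (LinearMap.ker f)
    refine ⟨Fin _ ⊕ ι, inferInstance, b₀.sumQuot b', Sum.elim (fun _ => 0) (fun i => w i + 1), ?_⟩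
    rintro i (j | j) hij
    · simp at hij
    · rcases i with i | i
      · simp
      · have hmk : (LinearMap.ker f).mkQ (b₀.sumQuot b' (Sum.inr j)) = b' j := by simp
        have hf'j : f' (b' j) = (LinearMap.ker f).mkQ (f (b₀.sumQuot b' (Sum.inr j))) := by
          rw [← hmk]; rfl
        have := hw i j (by
          rw [hf'j]
          simpa using hij)
        simpa using this

/-- If `B` strictly lowers the weights `w`, then the one-parameter group `diag (t ^ w i)` contracts
`B` to `0`, so an invariant polynomial takes the same value on `B` and on `0`. -/
theorem eval_eq_eval_zero_of_weight {K : Type*} [Field K] [Infinite K] {n : ℕ}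
    (P : MvPolynomial (Fin n × Fin n) K)
    (hinv : ∀ (A : Matrix (Fin n) (Fin n) K) (g : GL (Fin n) K),
      MvPolynomial.eval
        (fun p : Fin n × Fin n =>
          ((g : Matrix (Fin n) (Fin n) K) * A * (↑g⁻¹ : Matrix (Fin n) (Fin n) K)) p.1 p.2) P =
      MvPolynomial.eval (fun p : Fin n × Fin n => A p.1 p.2) P)
    (B : Matrix (Fin n) (Fin n) K) (w : Fin n → ℕ) (hB : ∀ i j, B i j ≠ 0 → w i < w j) :
    MvPolynomial.eval (fun p : Fin n × Fin n => B p.1 p.2) P =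
      MvPolynomial.eval (fun _ => 0) P := by
  -- The truncated subtraction is harmless: `B` vanishes where `w j < w i`.
  let Q : Polynomial K := MvPolynomial.aeval
    (fun p : Fin n × Fin n => Polynomial.C (B p.1 p.2) * Polynomial.X ^ (w p.2 - w p.1)) P
  have hQ : ∀ t : K, Q.eval t =
      MvPolynomial.eval (fun p : Fin n × Fin n => B p.1 p.2 * t ^ (w p.2 - w p.1)) P := by
    intro t
    have := MvPolynomial.map_aeval
      (fun p : Fin n × Fin n => Polynomial.C (B p.1 p.2) * Polynomial.X ^ (w p.2 - w p.1))
      (Polynomial.evalRingHom t) P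
    have hC : (Polynomial.evalRingHom t).comp (algebraMap K (Polynomial K)) = RingHom.id K := by
      ext; simp
    rw [hC] at this
    simp only [Polynomial.coe_evalRingHom, Polynomial.eval_mul, Polynomial.eval_C,
      Polynomial.eval_pow, Polynomial.eval_X] at this
    exact this
  have hconst : ∀ t : K, t ≠ 0 →
      Q.eval t = MvPolynomial.eval (fun p : Fin n × Fin n => B p.1 p.2) P := by
    intro t ht
    let g : GL (Fin n) K :=
      ⟨Matrix.diagonal fun i => (t ^ w i)⁻¹, Matrix.diagonal fun i => t ^ w i,
        by simp [Matrix.diagonal_mul_diagonal, ht],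
        by simp [Matrix.diagonal_mul_diagonal, ht]⟩
    rw [hQ, ← hinv B g]
    congr 2
    funext p
    change _ = (Matrix.diagonal (fun i => (t ^ w i)⁻¹) * B * Matrix.diagonal fun i => t ^ w i)
      p.1 p.2
    rw [Matrix.mul_diagonal, Matrix.diagonal_mul]
    by_cases h : B p.1 p.2 = 0
    · simp [h]
    · rw [pow_sub₀ t ht (hB _ _ h).le]
      ring
  have hQC : Q = Polynomial.C (MvPolynomial.eval (fun p : Fin n × Fin n => B p.1 p.2) P) := by
    refine Polynomial.eq_of_infinite_eval_eq _ _ (Set.Infinite.mono (s := {0}ᶜ) ?_ ?_)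
    · intro t ht
      simpa using hconst t ht
    · exact (Set.finite_singleton (0 : K)).infinite_compl
  have h0 := hQ 0
  rw [hQC, Polynomial.eval_C] at h0
  rw [h0]
  congr 2
  funext p
  by_cases h : B p.1 p.2 = 0
  · simp [h]
  · simp [zero_pow (Nat.sub_pos_of_lt (hB _ _ h)).ne']

/-- Over an infinite field, a conjugation-invariant polynomial function on `n × n` matrices
takes the same value on every nilpotent matrix as it does on `0`. -/
theorem stmt_3 (K : Type*) [Field K] [Infinite K] (n : ℕ)
    (P : MvPolynomial (Fin n × Fin n) K)
    (hinv : ∀ (A : Matrix (Fin n) (Fin n) K) (g : GL (Fin n) K),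
      MvPolynomial.eval
        (fun p : Fin n × Fin n =>
          ((g : Matrix (Fin n) (Fin n) K) * A * (↑g⁻¹ : Matrix (Fin n) (Fin n) K)) p.1 p.2) P =
      MvPolynomial.eval (fun p : Fin n × Fin n => A p.1 p.2) P)
    (A : Matrix (Fin n) (Fin n) K) (hA : IsNilpotent A) :
    MvPolynomial.eval (fun p : Fin n × Fin n => A p.1 p.2) P =
      MvPolynomial.eval (fun p : Fin n × Fin n => (0 : Matrix (Fin n) (Fin n) K) p.1 p.2) P := by
  obtain ⟨k, hk⟩ := hA
  obtain ⟨ι, _, b', w', hw'⟩ := exists_basis_weight_of_pow_eq_zero k (Matrix.toLin' A)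
    (by rw [← Matrix.toLin'_pow, hk, map_zero])
  let e : ι ≃ Fin n := Fintype.equivFinOfCardEq (by
    rw [← Module.finrank_eq_card_basis b', Module.finrank_fin_fun])
  let b := b'.reindex e
  let c := Pi.basisFun K (Fin n)
  let g : GL (Fin n) K := ⟨b.toMatrix c, c.toMatrix b,
    b.toMatrix_mul_toMatrix_flip c, c.toMatrix_mul_toMatrix_flip b⟩
  have hconj : (g : Matrix (Fin n) (Fin n) K) * A * (↑g⁻¹ : Matrix (Fin n) (Fin n) K) =
      LinearMap.toMatrix b b (Matrix.toLin' A) := by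
    change b.toMatrix c * A * c.toMatrix b = _
    rw [← basis_toMatrix_mul_linearMap_toMatrix_mul_basis_toMatrix b c b c]
    congr 2
    exact (LinearMap.toMatrix'_toLin' A).symm
  rw [← hinv A g, hconj]
  refine eval_eq_eval_zero_of_weight P hinv _ (w' ∘ e.symm) fun i j hij => hw' _ _ ?_
  simpa [LinearMap.toMatrix_apply, b] using hij
end

section
/- Let K be a field and let D, E be diagonal n×n matrices over K with diagonal entry sequences d, e : {1,…,n} → K. If D and E are similar, then there exists a permutation π of {1,…,n} such that e(j) = d(π(j)) for all j. (This is the GL_n instance of Lemma 4: the intersection of a conjugation orbit with the torus of diagonal matrices is a single orbit of the Weyl group, which for GL_n is the symmetric group permuting diagonal entries.) -/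
/-!
Similar matrices have the same characteristic polynomial, and the roots of the characteristic
polynomial of a diagonal matrix are its diagonal entries, counted with multiplicity. Hence `d` and
`e` take each value equally often, and a permutation is obtained by matching, value by value, the
fibres of `e` with those of `d`.
-/

/-- If two diagonal matrices are similar, their diagonal entry sequences agree up to a
permutation (the Weyl group of `GL_n`). -/
theorem stmt_4 (K : Type*) [Field K] (n : ℕ) (d e : Fin n → K)
    (h : ∃ g : GL (Fin n) K,
      Matrix.diagonal e =
        (g : Matrix (Fin n) (Fin n) K) * Matrix.diagonal d * (↑g⁻¹ : Matrix (Fin n) (Fin n) K)) :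
    ∃ π : Equiv.Perm (Fin n), ∀ j, e j = d (π j) := by
  classical
  obtain ⟨g, hg⟩ := h
  have hroots (f : Fin n → K) :
      (Matrix.diagonal f).charpoly.roots = Finset.univ.val.map f := by
    rw [Matrix.charpoly_diagonal, ← Polynomial.roots_multiset_prod_X_sub_C (Finset.univ.val.map f),
      Multiset.map_map]
    rfl
  have hm : Finset.univ.val.map e = Finset.univ.val.map d := by
    rw [← hroots, ← hroots, hg, Matrix.coe_units_inv, Matrix.charpoly_units_conj]
  have hcount (f : Fin n → K) (c : K) :
      Fintype.card {i // f i = c} = (Finset.univ.val.map f).count c := by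
    rw [Multiset.count_map, Fintype.card_subtype]
    simp only [eq_comm (a := c)]
    rfl
  have hcard (c : K) : Fintype.card {i // e i = c} = Fintype.card {i // d i = c} := by
    rw [hcount, hcount, hm]
  exact ⟨Equiv.ofFiberEquiv fun c => Fintype.equivOfCardEq (hcard c),
    fun j => (Equiv.ofFiberEquiv_map _ j).symm⟩
end

section
/- Let K be a field and A a diagonalizable n×n matrix over K, with minimal polynomial m_A. Then for every n×n matrix B over K, B is similar to A if and only if charpoly(B) = charpoly(A) and m_A(B) = 0. (Hence the similarity class of a semisimple matrix is the common zero locus of finitely many polynomial equations in the matrix entries; this is the GL_n instance of the statement in Theorem 1 that the orbit of a semisimple element is closed.) -/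
/-!
The forward direction holds because both the characteristic polynomial and the evaluation of a
polynomial at a matrix are compatible with conjugation. For the converse, let `A` be similar to
`diagonal d`. Its minimal polynomial divides the squarefree split polynomial `∏ (X - c)`, `c`
running over the distinct values of `d`, so this polynomial kills `B`. The factors being pairwise
coprime, the kernel decomposition (`ker_aeval_prod_le`) shows that the eigenvectors of `B` span,
whence `B` has an eigenbasis. Its eigenvalues, with multiplicity, are the roots of
`charpoly B = charpoly A = ∏ (X - d i)`, so after a permutation of the basis they are exactly
the `d i`, and `B` is similar to `diagonal d`, hence to `A`.
-/

/-- Two `n × n` matrices `A` and `B` over a field `K` are similar if `B = g * A * g⁻¹`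
for some invertible matrix `g`. -/
def SimilarMat {K : Type*} [Field K] {n : ℕ} (A B : Matrix (Fin n) (Fin n) K) : Prop :=
  ∃ g : GL (Fin n) K,
    B = (g : Matrix (Fin n) (Fin n) K) * A * (↑g⁻¹ : Matrix (Fin n) (Fin n) K)

/-- A matrix is diagonalizable if it is similar to a diagonal matrix. -/
def IsDiagonalizableMat {K : Type*} [Field K] {n : ℕ} (A : Matrix (Fin n) (Fin n) K) : Prop :=
  ∃ d : Fin n → K, SimilarMat A (Matrix.diagonal d)

open Polynomial Module

lemma SimilarMat.symm {K : Type*} [Field K] {n : ℕ} {A B : Matrix (Fin n) (Fin n) K}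
    (h : SimilarMat A B) : SimilarMat B A := by
  obtain ⟨g, rfl⟩ := h
  exact ⟨g⁻¹, by simp [mul_assoc]⟩

lemma SimilarMat.trans {K : Type*} [Field K] {n : ℕ} {A B C : Matrix (Fin n) (Fin n) K}
    (h : SimilarMat A B) (h' : SimilarMat B C) : SimilarMat A C := by
  obtain ⟨g, rfl⟩ := h
  obtain ⟨k, rfl⟩ := h'
  exact ⟨k * g, by simp only [mul_inv_rev, Units.val_mul, mul_assoc]⟩

lemma SimilarMat.charpoly_eq {K : Type*} [Field K] {n : ℕ} {A B : Matrix (Fin n) (Fin n) K}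
    (h : SimilarMat A B) : B.charpoly = A.charpoly := by
  obtain ⟨g, rfl⟩ := h
  rw [Matrix.charpoly_mul_comm, ← mul_assoc]
  simp

lemma SimilarMat.aeval_eq_zero {K : Type*} [Field K] {n : ℕ} {A B : Matrix (Fin n) (Fin n) K}
    (h : SimilarMat A B) {p : K[X]} (hp : aeval A p = 0) : aeval B p = 0 := by
  obtain ⟨g, rfl⟩ := h
  have := aeval_algHom_apply
    (MulSemiringAction.toAlgEquiv K (Matrix (Fin n) (Fin n) K) (ConjAct.toConjAct g)) A p
  rw [hp, map_zero] at this
  simpa [ConjAct.units_smul_def] using this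

lemma aeval_diagonal_prod_eq_zero {K : Type*} [Field K] [DecidableEq K] {n : ℕ} (d : Fin n → K) :
    aeval (Matrix.diagonal d) (∏ c ∈ Finset.univ.image d, (X - C c)) = 0 := by
  have := aeval_algHom_apply (Matrix.diagonalAlgHom K : (Fin n → K) →ₐ[K] _) d
    (∏ c ∈ Finset.univ.image d, (X - C c))
  rw [Matrix.diagonalAlgHom_apply] at this
  rw [this]
  have h0 : aeval d (∏ c ∈ Finset.univ.image d, (X - C c)) = 0 := by
    ext i
    rw [aeval_pi_apply₂]
    rw [map_prod]
    exact Finset.prod_eq_zero (Finset.mem_image_of_mem d (Finset.mem_univ i)) (by simp)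
  rw [h0, map_zero]

/-- Kernel decomposition: the linear factors `X - c` for distinct `c` are pairwise coprime. -/
lemma ker_aeval_prod_le {K V : Type*} [Field K] [AddCommGroup V] [Module K V] (f : End K V)
    (s : Finset K) :
    LinearMap.ker (aeval f (∏ c ∈ s, (X - C c))) ≤ ⨆ c, f.eigenspace c := by
  classical
  induction s using Finset.induction_on with
  | empty => simp [Module.End.one_eq_id]
  | insert a s ha ih =>
    rw [Finset.prod_insert ha, ← sup_ker_aeval_eq_ker_aeval_mul_of_coprime]
    · refine sup_le (le_iSup_of_le a ?_) ih
      simp [End.eigenspace_def, algebraMap_end_eq_smul_id, Module.End.one_eq_id]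
    · refine IsCoprime.prod_right fun c hc => isCoprime_X_sub_C_of_isUnit_sub ?_
      exact (sub_ne_zero.2 (by rintro rfl; exact ha hc)).isUnit

lemma exists_eigenbasis {K V : Type*} [Field K] [AddCommGroup V] [Module K V]
    [FiniteDimensional K V] {n : ℕ} (hn : finrank K V = n) (f : End K V)
    (h : ⨆ c, f.eigenspace c = ⊤) :
    ∃ (b : Basis (Fin n) K V) (e : Fin n → K), ∀ i, f (b i) = e i • b i := by
  have hs : ⊤ ≤ Submodule.span K {v : V | ∃ c : K, f v = c • v} := by
    rw [← h]
    exact iSup_le fun c v hv => Submodule.subset_span ⟨c, End.mem_eigenspace_iff.1 hv⟩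
  let b := Basis.ofSpan hs
  have := FiniteDimensional.fintypeBasisIndex b
  let b' := b.reindex (Fintype.equivFinOfCardEq ((finrank_eq_card_basis b).symm.trans hn))
  have hb : ∀ i, ∃ c : K, f (b' i) = c • b' i := fun i => by
    have : b' i ∈ Set.range b := by
      rw [← b.range_reindex]
      exact Set.mem_range_self i
    exact Basis.ofSpan_subset hs this
  choose e he using hb
  exact ⟨b', e, he⟩

/-- A matrix with an eigenbasis is conjugate, through the matrix whose columns are the basis
vectors, to the diagonal matrix of eigenvalues. -/
lemma similarMat_of_eigenbasis {K : Type*} [Field K] {n : ℕ} {B : Matrix (Fin n) (Fin n) K}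
    (b : Basis (Fin n) K (Fin n → K)) (e : Fin n → K)
    (h : ∀ i, Matrix.toLin' B (b i) = e i • b i) : SimilarMat (Matrix.diagonal e) B := by
  let P := (Pi.basisFun K (Fin n)).toMatrix b
  let Q := b.toMatrix (Pi.basisFun K (Fin n))
  have hPQ : P * Q = 1 := Basis.toMatrix_mul_toMatrix_flip _ _
  have hQP : Q * P = 1 := Basis.toMatrix_mul_toMatrix_flip _ _
  have hBP : B * P = P * Matrix.diagonal e := by
    ext i j
    rw [Matrix.mul_diagonal]
    simpa [P, Basis.toMatrix_apply, Matrix.mul_apply, Matrix.mulVec, dotProduct, mul_comm]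
      using congrFun (h j) i
  refine ⟨⟨P, Q, hPQ, hQP⟩, ?_⟩
  change B = P * Matrix.diagonal e * Q
  rw [← hBP, mul_assoc, hPQ, mul_one]

/-- Two finite families with the same multiset of values differ by a permutation. -/
lemma exists_perm_of_map_eq {α : Type*} {n : ℕ} {d e : Fin n → α}
    (h : Multiset.map d Finset.univ.val = Multiset.map e Finset.univ.val) :
    ∃ σ : Equiv.Perm (Fin n), ∀ i, e (σ i) = d i := by
  classical
  have hc : ∀ c, Nonempty ({i // d i = c} ≃ {i // e i = c}) := fun c => by
    refine Fintype.card_eq.1 ?_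
    have := congrArg (Multiset.count c) h
    rw [Multiset.count_map, Multiset.count_map] at this
    rw [Fintype.card_subtype, Fintype.card_subtype]
    simpa [Finset.card_def, eq_comm] using this
  exact ⟨Equiv.ofFiberEquiv fun c => (hc c).some, Equiv.ofFiberEquiv_map _⟩

lemma map_eq_of_charpoly_diagonal_eq {K : Type*} [Field K] {n : ℕ} {d e : Fin n → K}
    (h : (Matrix.diagonal d).charpoly = (Matrix.diagonal e).charpoly) :
    Multiset.map d Finset.univ.val = Multiset.map e Finset.univ.val := by
  have key : ∀ d : Fin n → K,
      (Matrix.diagonal d).charpoly.roots = Multiset.map d Finset.univ.val := fun d => by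
    rw [Matrix.charpoly_diagonal,
      roots_prod _ _ (Finset.prod_ne_zero_iff.2 fun i _ => X_sub_C_ne_zero _)]
    simp [Multiset.bind_singleton]
  rw [← key, h, key]

/-- For a diagonalizable matrix `A` with minimal polynomial `m_A`, a matrix `B` is similar
to `A` if and only if `charpoly B = charpoly A` and `m_A(B) = 0`: the similarity class
of a semisimple element is cut out by polynomial equations, hence closed. -/
theorem stmt_6 (K : Type*) [Field K] (n : ℕ) (A : Matrix (Fin n) (Fin n) K)
    (hA : IsDiagonalizableMat A) (B : Matrix (Fin n) (Fin n) K) :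
    SimilarMat A B ↔
      B.charpoly = A.charpoly ∧ Polynomial.aeval B (minpoly K A) = 0 := by
  constructor
  · exact fun h => ⟨h.charpoly_eq, h.aeval_eq_zero (minpoly.aeval K A)⟩
  · classical
    rintro ⟨hc, hm⟩
    obtain ⟨d, hd⟩ := hA
    have hB : aeval B (∏ c ∈ Finset.univ.image d, (X - C c)) = 0 := by
      obtain ⟨q, hq⟩ := minpoly.dvd K A (hd.symm.aeval_eq_zero (aeval_diagonal_prod_eq_zero d))
      rw [hq, map_mul, hm, zero_mul]
    have hf : aeval (Matrix.toLin' B) (∏ c ∈ Finset.univ.image d, (X - C c)) = 0 := by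
      have := aeval_algHom_apply (Matrix.toLinAlgEquiv' (R := K) (n := Fin n)) B
        (∏ c ∈ Finset.univ.image d, (X - C c))
      rwa [hB, map_zero] at this
    have htop : ⨆ c, End.eigenspace (Matrix.toLin' B) c = ⊤ := by
      rw [eq_top_iff, ← LinearMap.ker_eq_top.2 hf]
      exact ker_aeval_prod_le _ _
    obtain ⟨b, e, hbe⟩ := exists_eigenbasis (finrank_fin_fun K) (Matrix.toLin' B) htop
    have hde : (Matrix.diagonal d).charpoly = (Matrix.diagonal e).charpoly := by
      rw [hd.charpoly_eq, ← hc, (similarMat_of_eigenbasis b e hbe).charpoly_eq]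
    obtain ⟨σ, hσ⟩ := exists_perm_of_map_eq (map_eq_of_charpoly_diagonal_eq hde)
    refine hd.trans (similarMat_of_eigenbasis (b.reindex σ.symm) d fun i => ?_)
    rw [Basis.reindex_apply, Equiv.symm_symm, hbe, hσ]
end

section
/- Let A be an n×n complex matrix and write A = S + N with S diagonalizable, N nilpotent, and S·N = N·S (the Jordan–Chevalley decomposition). Then S lies in the closure, for the standard topology on the space of n×n complex matrices, of the similarity class {g·A·g⁻¹ : g invertible} of A. -/
/-!
Conjugation is a homeomorphism, so `S` may be taken to be `diagonal d`. Every matrix commuting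
with `diagonal d` then has an adjoint commuting with it, because both conditions only say that
the `(i, j)` entry vanishes when `d i ≠ d j`.

It suffices to find, for each `ε > 0`, an invertible `g` commuting with `S` with
`‖g * N * g⁻¹‖ ≤ ε`, since then `g * (S + N) * g⁻¹ = S + g * N * g⁻¹`. Put `M = ε⁻¹ • N`, which is
nilpotent, and `P = ∑ k, (M ^ k)ᴴ * M ^ k`. The sum telescopes to `Mᴴ * P * M = P - 1 ≤ P`, so
`M` is a contraction for the inner product defined by `P`. Hence `g = √P`, which commutes with
everything that commutes with `P`, conjugates `M` to a contraction
(`IsNilpotent.exists_conj_norm_le_one`).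
-/

section CStar

variable {R : Type*} [CStarAlgebra R] [PartialOrder R] [StarOrderedRing R]

/-- A nilpotent element of a C⋆-algebra is similar to a contraction, by an invertible element
commuting with everything that commutes with the nilpotent element and its adjoint. -/
lemma IsNilpotent.exists_conj_norm_le_one {M : R} (hM : IsNilpotent M) :
    ∃ g : Rˣ, ‖(g : R) * M * (↑g⁻¹ : R)‖ ≤ 1 ∧
      ∀ S : R, Commute S M → Commute S (star M) → Commute (g : R) S := by
  obtain ⟨m, hm⟩ := hM
  set P : R := ∑ k ∈ Finset.range (m + 1), star (M ^ k) * M ^ k with hP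
  have hm' : M ^ (m + 1) = 0 := by rw [_root_.pow_succ, hm, zero_mul]
  have htel : star M * P * M + 1 = P := by
    have h1 : star M * P * M =
        ∑ k ∈ Finset.range (m + 1), star (M ^ (k + 1)) * M ^ (k + 1) := by
      rw [hP, Finset.mul_sum, Finset.sum_mul]
      refine Finset.sum_congr rfl fun k _ => ?_
      rw [_root_.pow_succ, star_mul]
      simp only [mul_assoc]
    rw [h1, Finset.sum_range_succ, hm', mul_zero, add_zero, hP, Finset.sum_range_succ']
    simp
  have hP0 : 0 ≤ P := Finset.sum_nonneg fun k _ => star_mul_self_nonneg _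
  have hP1 : 1 ≤ P := by
    calc (1 : R) ≤ star M * P * M + 1 := le_add_of_nonneg_left (star_left_conjugate_nonneg hP0 M)
      _ = P := htel
  have hle : star M * P * M ≤ P := by
    calc star M * P * M ≤ star M * P * M + 1 := le_add_of_nonneg_right zero_le_one
      _ = P := htel
  have hPu : IsUnit P := CStarAlgebra.isUnit_of_le 1 hP1
  obtain ⟨g, hg⟩ := (CFC.isUnit_sqrt_iff P hP0).mpr hPu
  have hgg : (g : R) * g = P := by rw [hg, CFC.sqrt_mul_sqrt_self P hP0]
  have hgs : star (g : R) = g := by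
    rw [hg]; exact (IsSelfAdjoint.of_nonneg (CFC.sqrt_nonneg P)).star_eq
  have hgis : star (↑g⁻¹ : R) = (↑g⁻¹ : R) := by
    have : star g = g := Units.ext hgs
    rw [← Units.coe_star, star_inv, this]
  refine ⟨g, ?_, fun S h1 h2 => ?_⟩
  · have hx : star ((g : R) * M * (↑g⁻¹ : R)) * ((g : R) * M * (↑g⁻¹ : R)) ≤ 1 := by
      calc star ((g : R) * M * (↑g⁻¹ : R)) * ((g : R) * M * (↑g⁻¹ : R))
          = star (↑g⁻¹ : R) * (star M * P * M) * (↑g⁻¹ : R) := by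
            rw [← hgg]; simp only [star_mul, hgs, mul_assoc]
        _ ≤ star (↑g⁻¹ : R) * P * (↑g⁻¹ : R) := star_left_conjugate_le_conjugate hle _
        _ = 1 := by rw [hgis, ← hgg]; simp
    have hn := (CStarAlgebra.norm_le_one_iff_of_nonneg _ (star_mul_self_nonneg _)).mpr hx
    rw [CStarRing.norm_star_mul_self] at hn
    nlinarith [norm_nonneg ((g : R) * M * (↑g⁻¹ : R))]
  · have hPS : Commute P S := by
      refine Commute.sum_left _ _ _ fun k _ => ?_
      rw [star_pow]
      exact ((h2.pow_right k).mul_right (h1.pow_right k)).symm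
    rw [hg]
    exact Commute.cfcₙ_nnreal hPS _

/-- Rescaling `N` before conjugating it to a contraction makes its conjugates arbitrarily small. -/
lemma IsNilpotent.mem_closure_conj {S N : R} (hN : IsNilpotent N) (h1 : Commute S N)
    (h2 : Commute S (star N)) :
    S ∈ closure {B : R | ∃ g : Rˣ, B = (g : R) * (S + N) * (↑g⁻¹ : R)} := by
  refine Metric.mem_closure_iff.mpr fun ε hε => ?_
  -- Half of `ε`: the contraction estimate is not strict, while the distance bound must be.
  set c : ℝ := ε / 2 with hc
  have hc0 : 0 < c := by positivity
  obtain ⟨g, hg, hgS⟩ := (hN.smul c⁻¹).exists_conj_norm_le_one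
  have hS : Commute (g : R) S := hgS S (h1.smul_right _) (by
    rw [star_smul]; exact h2.smul_right _)
  refine ⟨_, ⟨g, rfl⟩, ?_⟩
  have hconj : (g : R) * (S + N) * (↑g⁻¹ : R) = S + (g : R) * N * (↑g⁻¹ : R) := by
    rw [mul_add, add_mul, hS.eq, Units.mul_inv_cancel_right]
  rw [hconj, dist_self_add_right]
  rw [mul_smul_comm, smul_mul_assoc, norm_smul, Real.norm_of_nonneg (by positivity),
    inv_mul_le_iff₀ hc0] at hg
  linarith

end CStar

lemma Matrix.commute_diagonal_conjTranspose {n : Type*} [Fintype n] [DecidableEq n]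
    {d : n → ℂ} {N : Matrix n n ℂ} (h : Commute (Matrix.diagonal d) N) :
    Commute (Matrix.diagonal d) N.conjTranspose := by
  ext i j
  have hij := congrFun (congrFun h.eq j) i
  simp only [Matrix.diagonal_mul, Matrix.mul_diagonal, Matrix.conjTranspose_apply] at hij ⊢
  rcases eq_or_ne (N j i) 0 with h0 | h0
  · simp [h0]
  · have : d j = d i := mul_right_cancel₀ h0 (by rw [hij, mul_comm])
    rw [this, mul_comm]

open scoped Matrix.Norms.L2Operator MatrixOrder in
/-- `IsNilpotent.mem_closure_conj` applies because the L2 operator norm, which makes matrices a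
C⋆-algebra, induces definitionally the product topology. -/
lemma Matrix.mem_closure_conj_of_diagonal {n : ℕ} {d : Fin n → ℂ} {N : Matrix (Fin n) (Fin n) ℂ}
    (hN : IsNilpotent N) (h : Commute (Matrix.diagonal d) N) :
    Matrix.diagonal d ∈ closure {B : Matrix (Fin n) (Fin n) ℂ | ∃ g : GL (Fin n) ℂ,
      B = (g : Matrix (Fin n) (Fin n) ℂ) * (Matrix.diagonal d + N) *
        (↑g⁻¹ : Matrix (Fin n) (Fin n) ℂ)} :=
  hN.mem_closure_conj h (Matrix.commute_diagonal_conjTranspose h)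

/-- The semisimple part of the Jordan–Chevalley decomposition of a complex matrix lies in the
closure of its similarity class. -/
theorem stmt_7 (n : ℕ) (A S N : Matrix (Fin n) (Fin n) ℂ)
    (hsum : A = S + N)
    (hS : ∃ d : Fin n → ℂ, ∃ g : GL (Fin n) ℂ,
      Matrix.diagonal d = (g : Matrix (Fin n) (Fin n) ℂ) * S * (↑g⁻¹ : Matrix (Fin n) (Fin n) ℂ))
    (hN : IsNilpotent N) (hcomm : S * N = N * S) :
    S ∈ closure {B : Matrix (Fin n) (Fin n) ℂ | ∃ g : GL (Fin n) ℂ,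
      B = (g : Matrix (Fin n) (Fin n) ℂ) * A * (↑g⁻¹ : Matrix (Fin n) (Fin n) ℂ)} := by
  obtain ⟨d, g, hd⟩ := hS
  set G : Matrix (Fin n) (Fin n) ℂ := (g : Matrix (Fin n) (Fin n) ℂ) with hG
  set G' : Matrix (Fin n) (Fin n) ℂ := (↑g⁻¹ : Matrix (Fin n) (Fin n) ℂ) with hG'
  have hinv : G' * G = 1 := g.inv_mul
  have hmul (X Y : Matrix (Fin n) (Fin n) ℂ) : (G * X * G') * (G * Y * G') = G * (X * Y) * G' := by
    calc (G * X * G') * (G * Y * G') = G * X * (G' * G) * Y * G' := by simp only [mul_assoc]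
      _ = G * (X * Y) * G' := by rw [hinv]; simp only [mul_assoc, mul_one]
  have hback (X : Matrix (Fin n) (Fin n) ℂ) : G' * (G * X * G') * G = X := by
    calc G' * (G * X * G') * G = (G' * G) * X * (G' * G) := by simp only [mul_assoc]
      _ = X := by rw [hinv, one_mul, mul_one]
  have hN' : IsNilpotent (G * N * G') := by
    obtain ⟨k, hk⟩ := hN
    exact ⟨k, by rw [hG, hG', Units.conj_pow, hk, mul_zero, zero_mul]⟩
  have hcomm' : Commute (Matrix.diagonal d) (G * N * G') := by
    rw [hd, commute_iff_eq, hmul, hmul, hcomm]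
  have hcl := Matrix.mem_closure_conj_of_diagonal hN' hcomm'
  have hcont : Continuous fun X : Matrix (Fin n) (Fin n) ℂ => G' * X * G := by fun_prop
  have := map_mem_closure hcont hcl (t := {B : Matrix (Fin n) (Fin n) ℂ | ∃ g : GL (Fin n) ℂ,
      B = (g : Matrix (Fin n) (Fin n) ℂ) * A * (↑g⁻¹ : Matrix (Fin n) (Fin n) ℂ)}) ?_
  · rwa [hd, hback] at this
  · rintro _ ⟨u, rfl⟩
    refine ⟨g⁻¹ * u * g, ?_⟩
    rw [hd, hsum]
    simp only [mul_inv_rev, inv_inv, Units.val_mul, ← hG, ← hG', mul_add, add_mul, mul_assoc]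
end

section
/- Let K be an infinite field and let P be a polynomial function on n×n matrices over K (given by a multivariate polynomial in the n² entries) which is invariant under conjugation, i.e. P(g·A·g⁻¹) = P(A) for all matrices A and all invertible g. Then there exists a polynomial Q in n variables over K such that P(A) = Q(c₀(A), c₁(A), …, c_{n−1}(A)) for every matrix A, where c_i(A) is the coefficient of X^i in charpoly(A). (This is the GL_n instance of the identification K[G]^G ≅ K[T]^W used in Corollary 5: the ring of conjugation-invariant polynomial functions on matrices is generated by the coefficients of the characteristic polynomial.) -/
/-!
The matrices `A` for which `v = e₀` is a cyclic vector form a Zariski-dense open set: the Krylov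
matrix with columns `v, A v, …, A^(n-1) v` has determinant a nonzero polynomial in the entries of
`A` (`krylovDet_ne_zero`). By Cayley–Hamilton the Krylov matrix intertwines `A` with the companion
matrix of its characteristic polynomial (`mul_krylov`), so an invariant `P` takes the same value at
`A` and at that companion matrix. The entries of the companion matrix are polynomials in
`c₀, …, c_{n-1}`, so substituting the generic companion matrix into `P` gives `Q`. The identity
`P(A) = Q(c(A))` holds wherever the Krylov determinant does not vanish, hence everywhere, because
the polynomial ring is a domain and polynomials over an infinite field are determined by their
values. No field extension and no diagonalization is needed.
-/

open Matrix MvPolynomial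

/-- The first standard basis vector, written so that it makes sense also for `n = 0`. -/
def firstVec (R : Type*) [CommRing R] (n : ℕ) : Fin n → R :=
  fun i => if (i : ℕ) = 0 then 1 else 0

/-- The Krylov matrix of `A`: column `j` is `A ^ j` applied to the first standard basis vector. -/
def krylov {R : Type*} [CommRing R] {n : ℕ} (A : Matrix (Fin n) (Fin n) R) :
    Matrix (Fin n) (Fin n) R :=
  Matrix.of fun i j => ((A ^ (j : ℕ)) *ᵥ firstVec R n) i

/-- The companion matrix of `X ^ n + c (n-1) X ^ (n-1) + ⋯ + c 0`, with ones below the diagonal and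
`-c` as last column. -/
def compMatrix {R : Type*} [CommRing R] {n : ℕ} (c : Fin n → R) : Matrix (Fin n) (Fin n) R :=
  Matrix.of fun i j =>
    if (j : ℕ) + 1 = n then -c i else if (i : ℕ) = (j : ℕ) + 1 then 1 else 0

/-- Cayley–Hamilton applied to the first standard basis vector. -/
lemma pow_mulVec_firstVec {R : Type*} [CommRing R] [Nontrivial R] {n : ℕ}
    (A : Matrix (Fin n) (Fin n) R) :
    (A ^ n) *ᵥ firstVec R n =
      -∑ i : Fin n, A.charpoly.coeff i • ((A ^ (i : ℕ)) *ᵥ firstVec R n) := by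
  have h := Matrix.aeval_self_charpoly A
  have hd : A.charpoly.natDegree = n := by simp [Matrix.charpoly_natDegree_eq_dim]
  have hl : A.charpoly.coeff n = 1 := by
    have := (Matrix.charpoly_monic A).coeff_natDegree
    rwa [hd] at this
  rw [Polynomial.aeval_eq_sum_range, hd, Finset.sum_range_succ, hl, one_smul,
    ← Fin.sum_univ_eq_sum_range (fun i => A.charpoly.coeff i • A ^ i)] at h
  have h' := congrArg (· *ᵥ firstVec R n) h
  simp only [Matrix.add_mulVec, Matrix.sum_mulVec, Matrix.zero_mulVec, Matrix.smul_mulVec] at h'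
  exact eq_neg_of_add_eq_zero_right h'

/-- The Krylov matrix intertwines `A` with the companion matrix of its characteristic
polynomial. -/
lemma mul_krylov {R : Type*} [CommRing R] [Nontrivial R] {n : ℕ} (A : Matrix (Fin n) (Fin n) R) :
    A * krylov A = krylov A * compMatrix (fun i : Fin n => A.charpoly.coeff i) := by
  ext i j
  have hL : (A * krylov A) i j = ((A ^ ((j : ℕ) + 1)) *ᵥ firstVec R n) i := by
    rw [pow_succ', ← Matrix.mulVec_mulVec]
    rfl
  rw [hL, Matrix.mul_apply]
  by_cases hj : (j : ℕ) + 1 = n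
  · rw [hj, pow_mulVec_firstVec]
    simp [krylov, compMatrix, hj, mul_comm]
  · have hlt : (j : ℕ) + 1 < n := by omega
    rw [Finset.sum_eq_single (⟨(j : ℕ) + 1, hlt⟩ : Fin n)]
    · simp [krylov, compMatrix, hj]
    · intro b _ hb
      have : (b : ℕ) ≠ (j : ℕ) + 1 := fun h => hb (Fin.ext h)
      simp [compMatrix, hj, this]
    · simp

lemma map_krylov {R S : Type*} [CommRing R] [CommRing S] {n : ℕ} (f : R →+* S)
    (A : Matrix (Fin n) (Fin n) R) : f.mapMatrix (krylov A) = krylov (f.mapMatrix A) := by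
  ext i j
  have hv : f ∘ firstVec R n = firstVec S n := by
    ext k
    simp [firstVec, apply_ite f]
  simp only [krylov, RingHom.mapMatrix_apply, Matrix.map_apply, Matrix.of_apply,
    RingHom.map_mulVec, hv]
  rw [← RingHom.mapMatrix_apply, map_pow, RingHom.mapMatrix_apply]

/-- The companion matrix of `X ^ n` is the shift matrix, for which the first standard basis vector
is cyclic. -/
lemma krylov_shift {R : Type*} [CommRing R] {n : ℕ} :
    krylov (compMatrix (fun _ : Fin n => (0 : R))) = 1 := by
  have key : ∀ k : ℕ, k < n → ∀ i : Fin n,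
      ((compMatrix (fun _ : Fin n => (0 : R)) ^ k) *ᵥ firstVec R n) i =
        if (i : ℕ) = k then 1 else 0 := by
    intro k
    induction k with
    | zero => intro _ i; simp [firstVec]
    | succ k ih =>
      intro hk i
      have hk' : k < n := by omega
      rw [pow_succ', ← Matrix.mulVec_mulVec, Matrix.mulVec, dotProduct,
        Finset.sum_eq_single (⟨k, hk'⟩ : Fin n)]
      · have hne : k + 1 ≠ n := by omega
        rw [ih hk']
        simp [compMatrix, hne]
      · intro b _ hb
        have : (b : ℕ) ≠ k := fun h => hb (Fin.ext h)
        rw [ih hk']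
        simp [this]
      · simp
  ext i j
  simp [krylov, key j j.2, Matrix.one_apply, Fin.ext_iff]

lemma mapMatrix_generic {K : Type*} [Field K] {n : ℕ} (A : Matrix (Fin n) (Fin n) K) :
    (eval (fun p : Fin n × Fin n => A p.1 p.2)).mapMatrix (mvPolynomialX (Fin n) (Fin n) K) = A := by
  ext i j
  simp

lemma eval_krylovDet {K : Type*} [Field K] {n : ℕ} (A : Matrix (Fin n) (Fin n) K) :
    eval (fun p : Fin n × Fin n => A p.1 p.2) (krylov (mvPolynomialX (Fin n) (Fin n) K)).det =
      (krylov A).det := by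
  rw [RingHom.map_det, map_krylov, mapMatrix_generic]

lemma krylovDet_ne_zero {K : Type*} [Field K] {n : ℕ} :
    (krylov (mvPolynomialX (Fin n) (Fin n) K)).det ≠ 0 := by
  intro h
  have := eval_krylovDet (compMatrix (fun _ : Fin n => (0 : K)))
  rw [h, krylov_shift] at this
  simp at this

lemma eval_charpoly_coeff {K : Type*} [Field K] {n : ℕ} (A : Matrix (Fin n) (Fin n) K) (i : ℕ) :
    eval (fun p : Fin n × Fin n => A p.1 p.2)
      ((mvPolynomialX (Fin n) (Fin n) K).charpoly.coeff i) = A.charpoly.coeff i := by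
  rw [← Polynomial.coeff_map, ← Matrix.charpoly_map, ← RingHom.mapMatrix_apply, mapMatrix_generic]

theorem stmt_10 (K : Type*) [Field K] [Infinite K] (n : ℕ)
    (P : MvPolynomial (Fin n × Fin n) K)
    (hinv : ∀ (A : Matrix (Fin n) (Fin n) K) (g : GL (Fin n) K),
      MvPolynomial.eval
        (fun p : Fin n × Fin n =>
          ((g : Matrix (Fin n) (Fin n) K) * A * (↑g⁻¹ : Matrix (Fin n) (Fin n) K)) p.1 p.2) P =
      MvPolynomial.eval (fun p : Fin n × Fin n => A p.1 p.2) P) :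
    ∃ Q : MvPolynomial (Fin n) K, ∀ A : Matrix (Fin n) (Fin n) K,
      MvPolynomial.eval (fun p : Fin n × Fin n => A p.1 p.2) P =
        MvPolynomial.eval (fun i : Fin n => A.charpoly.coeff i) Q := by
  -- `Q` is `P` evaluated at the generic companion matrix.
  let Q : MvPolynomial (Fin n) K :=
    bind₁ (fun p : Fin n × Fin n => compMatrix (X : Fin n → MvPolynomial (Fin n) K) p.1 p.2) P
  have hQ : ∀ c : Fin n → K,
      eval c Q = eval (fun p : Fin n × Fin n => compMatrix c p.1 p.2) P := by
    intro c
    have hC : (fun p : Fin n × Fin n =>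
        eval c (compMatrix (X : Fin n → MvPolynomial (Fin n) K) p.1 p.2)) =
        fun p => compMatrix c p.1 p.2 := by
      funext p
      simp only [compMatrix, Matrix.of_apply]
      split_ifs <;> simp
    rw [← hC]
    simp only [Q, ← coe_aeval_eq_eval, RingHom.coe_coe, aeval_bind₁]
  -- `R` is the polynomial in the matrix entries that represents `A ↦ Q(c(A))`.
  let R : MvPolynomial (Fin n × Fin n) K :=
    bind₁ (fun i : Fin n => (mvPolynomialX (Fin n) (Fin n) K).charpoly.coeff i) Q
  have hR : ∀ A : Matrix (Fin n) (Fin n) K,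
      eval (fun p : Fin n × Fin n => A p.1 p.2) R =
        eval (fun i : Fin n => A.charpoly.coeff i) Q := by
    intro A
    simp only [← eval_charpoly_coeff]
    simp only [R, ← coe_aeval_eq_eval, RingHom.coe_coe, aeval_bind₁]
  refine ⟨Q, fun A => ?_⟩
  suffices h : (krylov (mvPolynomialX (Fin n) (Fin n) K)).det * (P - R) = 0 by
    have hPR : P = R := sub_eq_zero.mp ((mul_eq_zero.mp h).resolve_left krylovDet_ne_zero)
    rw [← hR, ← hPR]
  apply MvPolynomial.funext
  intro x
  obtain ⟨B, rfl⟩ : ∃ B : Matrix (Fin n) (Fin n) K, x = fun p => B p.1 p.2 :=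
    ⟨Matrix.of fun i j => x (i, j), rfl⟩
  rw [map_mul, map_sub, map_zero, eval_krylovDet, hR, hQ]
  by_cases hdet : (krylov B).det = 0
  · rw [hdet, zero_mul]
  · let g : GL (Fin n) K := Matrix.GeneralLinearGroup.mkOfDetNeZero (krylov B) hdet
    have hg : (g : Matrix (Fin n) (Fin n) K) = krylov B := rfl
    have hconj : (g : Matrix (Fin n) (Fin n) K) *
        compMatrix (fun i : Fin n => B.charpoly.coeff i) *
        (↑g⁻¹ : Matrix (Fin n) (Fin n) K) = B := by
      rw [hg, ← mul_krylov, ← hg, mul_assoc, ← Units.val_mul, mul_inv_cancel, Units.val_one,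
        mul_one]
    have h := hinv (compMatrix (fun i : Fin n => B.charpoly.coeff i)) g
    rw [hconj] at h
    rw [h, sub_self, mul_zero]
end

section
/- Let (W, S) be a Coxeter system with simple reflections s_i indexed by a set B and Coxeter matrix M, let e : B → B be a bijection with M(e(i), e(j)) = M(i, j) for all i, j, and let σ : W → W be the automorphism determined by σ(s_i) = s_{e(i)}. Let J ⊆ B, let W_J be the subgroup generated by {s_j : j ∈ J}, and let W_{e(J)} be the subgroup generated by {s_j : j ∈ e(J)}. Suppose u ∈ W_J and set w = u⁻¹·σ(u). If w has minimal length in its coset w·W_{e(J)}, i.e. ℓ(w) ≤ ℓ(w·v) for all v ∈ W_{e(J)}, then w = 1. (This is the combinatorial fact, noted in the paper, that 1 ≤_{J,σ} w forces w = 1, which implies that the union of the pieces Z_{J,σ;1} is open in X_σ.) -/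
/-!
The element `σ(u)` lies in `W_{e(J)}` and `w * σ(u)⁻¹ = u⁻¹`. For `w` of minimal length in
`w * W_K`, lengths add: `ℓ(w * v) ≥ ℓ(w) + ℓ(v)` for all `v ∈ W_K`. With `K = e(J)` and
`v = σ(u)⁻¹` this reads `ℓ(u) ≥ ℓ(w) + ℓ(σ(u))`, and `σ` preserves length because it permutes
the simple reflections, so `ℓ(w) = 0`.

Additivity of lengths (`length_add_length_le_of_minimal`) rests on the exchange condition
(`exists_eraseIdx_of_isRightDescent`). The latter comes from the action of `W` on
`W × ZMod 2` in which `s_i` sends `(t, ε)` to `(s_i t s_i, ε + [t = s_i])`: it shows that the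
parity of the number of occurrences of `t` in the right inversion sequence of a word depends
only on the product of the word (`count_rightInvSeq_eq`).
-/

namespace CoxeterSystem

open List

variable {B : Type*} {W : Type*} [Group W] {M : CoxeterMatrix B} (cs : CoxeterSystem M W)

open Classical in
/-- The map `(t, ε) ↦ (s_i t s_i, ε + [t = s_i])`, recording in `ε` how often a reflection is
sent to its negative in the action on roots. It is defined on all of `W × ZMod 2` rather than
only for reflections `t`, since the braid relations hold there as well. -/
noncomputable def signedConj (i : B) : Function.End (W × ZMod 2) :=
  fun p => (cs.simple i * p.1 * cs.simple i, p.2 + if p.1 = cs.simple i then 1 else 0)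

open Classical in
theorem signedConj_apply (i : B) (p : W × ZMod 2) :
    cs.signedConj i p =
      (cs.simple i * p.1 * cs.simple i, p.2 + if p.1 = cs.simple i then 1 else 0) := rfl

open Classical in
/-- The indicator terms collected by `(s_i s_j) ^ n` run over the elements `s_j (s_i s_j) ^ k`
of the dihedral group, for `k < 2 n`. -/
theorem signedConj_mul_pow (i j : B) (n : ℕ) (p : W × ZMod 2) :
    ((cs.signedConj i * cs.signedConj j) ^ n) p =
      ((cs.simple i * cs.simple j) ^ n * p.1 * ((cs.simple i * cs.simple j) ^ n)⁻¹,
        p.2 + ∑ k ∈ Finset.range (2 * n),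
          if p.1 = cs.simple j * (cs.simple i * cs.simple j) ^ k then 1 else 0) := by
  induction n with
  | zero => simp; rfl
  | succ n ih =>
    have hj := cs.simple_mul_simple_self j
    set r := cs.simple i * cs.simple j with hr
    -- `s_j` inverts the rotation `r = s_i s_j`
    have hconj : ∀ k : ℕ, cs.simple j * r ^ k = (r ^ k)⁻¹ * cs.simple j := by
      intro k
      have h1 : cs.simple j * r * (cs.simple j)⁻¹ = r⁻¹ := by simp [hr, mul_assoc]
      have h2 : cs.simple j * r ^ k * (cs.simple j)⁻¹ = (r ^ k)⁻¹ := by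
        rw [← conj_pow, h1, inv_pow]
      rw [← h2]; group
    have e1 : (r ^ n * p.1 * (r ^ n)⁻¹ = cs.simple j) ↔
        p.1 = cs.simple j * r ^ (2 * n) := by
      rw [two_mul, pow_add, ← mul_assoc, hconj n]
      constructor
      · intro h; rw [← h]; group
      · intro h; rw [h]; group
    have e2 : (cs.simple j * (r ^ n * p.1 * (r ^ n)⁻¹) * cs.simple j = cs.simple i) ↔
        p.1 = cs.simple j * r ^ (2 * n + 1) := by
      have h0 : cs.simple j * r ^ (2 * n + 1) = (r ^ n)⁻¹ * (cs.simple j * r) * r ^ n := by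
        rw [two_mul, add_assoc, pow_add, ← mul_assoc, hconj n, pow_succ']; group
      have h3 : cs.simple j * r = cs.simple j * cs.simple i * cs.simple j := by
        rw [hr, mul_assoc]
      rw [h0, h3]
      constructor
      · intro h; rw [← h]; simp [mul_assoc]
      · intro h; rw [h]; simp [mul_assoc]
    rw [pow_succ']
    change (cs.signedConj i) ((cs.signedConj j)
      (((cs.signedConj i * cs.signedConj j) ^ n) p)) = _
    rw [ih]
    rw [signedConj_apply, signedConj_apply]
    simp only [e1, e2]
    rw [show 2 * (n + 1) = 2 * n + 1 + 1 by ring, Finset.sum_range_succ, Finset.sum_range_succ]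
    refine Prod.ext ?_ ?_
    · simp only [pow_succ' r n, mul_inv_rev]
      simp [hr, mul_assoc]
    · simp only [add_assoc]

theorem isLiftable_signedConj : M.IsLiftable cs.signedConj := by
  classical
  intro i j
  funext p
  rw [signedConj_mul_pow]
  have hr := cs.simple_mul_simple_pow i j
  -- modulo `r ^ M i j = 1` every indicator occurs twice
  rw [two_mul, Finset.sum_range_add]
  simp only [pow_add, hr, one_mul]
  rw [CharTwo.add_self_eq_zero]
  simp; rfl

open Classical in
theorem prod_map_signedConj (ω : List B) (p : W × ZMod 2) :
    (ω.map cs.signedConj).prod p =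
      (cs.wordProd ω * p.1 * (cs.wordProd ω)⁻¹,
        p.2 + ((cs.rightInvSeq ω).count p.1 : ℕ)) := by
  induction ω with
  | nil => simp; rfl
  | cons i ω ih =>
    rw [map_cons, prod_cons]
    change cs.signedConj i ((ω.map cs.signedConj).prod p) = _
    rw [ih]
    have h : (cs.wordProd ω * p.1 * (cs.wordProd ω)⁻¹ = cs.simple i) ↔
        (cs.wordProd ω)⁻¹ * cs.simple i * cs.wordProd ω = p.1 := by
      constructor
      · intro h; rw [← h]; group
      · intro h; rw [← h]; group
    rw [signedConj_apply]
    simp only [h]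
    refine Prod.ext ?_ ?_
    · simp [wordProd_cons, mul_assoc]
    · simp only [rightInvSeq, count_cons, beq_iff_eq, Nat.cast_add, Nat.cast_ite,
        Nat.cast_one, Nat.cast_zero, add_assoc]

open Classical in
/-- The parity of the multiplicity of `t` in the right inversion sequence depends only on the
product of the word. -/
theorem count_rightInvSeq_eq {ω ω' : List B} (h : cs.wordProd ω = cs.wordProd ω') (t : W) :
    (((cs.rightInvSeq ω).count t : ℕ) : ZMod 2) = ((cs.rightInvSeq ω').count t : ℕ) := by
  have key : ∀ ω : List B, cs.lift ⟨cs.signedConj, cs.isLiftable_signedConj⟩ (cs.wordProd ω) =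
      (ω.map cs.signedConj).prod := by
    intro ω
    rw [wordProd, map_list_prod, List.map_map]
    congr 1
    refine List.map_congr_left fun i _ => ?_
    exact cs.lift_apply_simple cs.isLiftable_signedConj i
  have h1 : (ω.map cs.signedConj).prod = (ω'.map cs.signedConj).prod := by
    rw [← key, ← key, h]
  have h2 := congrArg Prod.snd (congrFun h1 (t, 0))
  rw [prod_map_signedConj, prod_map_signedConj] at h2
  simpa using h2

/-- The exchange condition, for a word that need not be reduced. -/
theorem exists_eraseIdx_of_isRightDescent {ω : List B} {k : B}
    (h : cs.IsRightDescent (cs.wordProd ω) k) :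
    ∃ j < ω.length, cs.wordProd ω * cs.simple k = cs.wordProd (ω.eraseIdx j) := by
  classical
  obtain ⟨ω', hred, hω'⟩ := cs.exists_isReduced (cs.wordProd ω * cs.simple k)
  have hprod : cs.wordProd (ω'.concat k) = cs.wordProd ω := by
    rw [wordProd_concat, ← hω']; simp
  -- appending `k` to a reduced word of `π ω * s_k` gives a reduced word of `π ω`
  have hred' : cs.IsReduced (ω'.concat k) := by
    have h1 := cs.isRightDescent_iff.mp h
    rw [hω', hred.eq] at h1
    rw [IsReduced, hprod, ← h1]; simp
  have hmem : cs.simple k ∈ cs.rightInvSeq (ω'.concat k) := by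
    rw [rightInvSeq_concat]; simp
  have hc := cs.count_rightInvSeq_eq hprod (cs.simple k)
  rw [count_eq_one_of_mem hred'.nodup_rightInvSeq hmem] at hc
  have hmem' : cs.simple k ∈ cs.rightInvSeq ω := by
    by_contra hn
    rw [count_eq_zero_of_not_mem hn] at hc
    simp at hc
  obtain ⟨j, hj, hjk⟩ := List.getElem_of_mem hmem'
  refine ⟨j, by simpa using hj, ?_⟩
  rw [← wordProd_mul_getD_rightInvSeq, List.getD_eq_getElem _ _ hj, hjk]

theorem wordProd_mem_closure {K : Set B} {ω : List B} (h : ∀ i ∈ ω, i ∈ K) :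
    cs.wordProd ω ∈ Subgroup.closure (cs.simple '' K) := by
  refine Subgroup.list_prod_mem _ fun x hx => ?_
  obtain ⟨i, hi, rfl⟩ := List.mem_map.mp hx
  exact Subgroup.subset_closure ⟨i, h i hi, rfl⟩

theorem exists_word_of_mem_closure {K : Set B} {v : W}
    (hv : v ∈ Subgroup.closure (cs.simple '' K)) :
    ∃ ω : List B, (∀ i ∈ ω, i ∈ K) ∧ cs.wordProd ω = v := by
  induction hv using Subgroup.closure_induction with
  | mem x hx =>
    obtain ⟨i, hi, rfl⟩ := hx
    exact ⟨[i], by simpa using hi, by simp⟩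
  | one => exact ⟨[], by simp, by simp⟩
  | mul x y _ _ hx hy =>
    obtain ⟨a, ha, rfl⟩ := hx
    obtain ⟨b, hb, rfl⟩ := hy
    refine ⟨a ++ b, fun i hi => ?_, cs.wordProd_append a b⟩
    exact (List.mem_append.mp hi).elim (ha i) (hb i)
  | inv x _ hx =>
    obtain ⟨a, ha, rfl⟩ := hx
    exact ⟨a.reverse, by simpa using ha, by simp⟩

/-- Appending to a minimal coset representative `w` a word in `K` that is shortest among the
words in `K` with the same product never cancels: a letter exchanged within the word would
shorten it, and one exchanged within a reduced word of `w` would give a shorter element of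
`w * W_K`. -/
theorem length_mul_wordProd_of_minimal {K : Set B} {w : W}
    (hmin : ∀ v ∈ Subgroup.closure (cs.simple '' K), cs.length w ≤ cs.length (w * v))
    (ω : List B) (hK : ∀ i ∈ ω, i ∈ K)
    (hshort : ∀ ω' : List B, (∀ i ∈ ω', i ∈ K) → cs.wordProd ω' = cs.wordProd ω →
      ω.length ≤ ω'.length) :
    cs.length (w * cs.wordProd ω) = cs.length w + ω.length := by
  induction ω using List.reverseRecOn with
  | nil => simp
  | append_singleton ω k ih =>
    have hKω : ∀ i ∈ ω, i ∈ K := fun i hi => hK i (by simp [hi])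
    have hk : k ∈ K := hK k (by simp)
    have hlen := ih hKω (by
      intro ω' hω' he
      have := hshort (ω' ++ [k])
        (fun i hi => by
          rcases List.mem_append.mp hi with h | h
          · exact hω' i h
          · rw [List.mem_singleton.mp h]; exact hk)
        (by rw [wordProd_append, wordProd_append, he])
      simpa using this)
    rw [wordProd_append, wordProd_singleton, ← mul_assoc, List.length_append,
      List.length_singleton]
    rcases cs.length_mul_simple (w * cs.wordProd ω) k with h | h
    · rw [h, hlen]; ring
    exfalso
    obtain ⟨α, hα, hwα⟩ := cs.exists_isReduced w
    have hdesc : cs.IsRightDescent (cs.wordProd (α ++ ω)) k := by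
      rw [wordProd_append, ← hwα, isRightDescent_iff]; exact h
    obtain ⟨j, hj, he⟩ := cs.exists_eraseIdx_of_isRightDescent hdesc
    rw [wordProd_append, ← hwα] at he
    rcases lt_or_ge j α.length with hjα | hjα
    · rw [List.eraseIdx_append_of_lt_length hjα, wordProd_append] at he
      have hmem : cs.wordProd ω * cs.simple k * (cs.wordProd ω)⁻¹ ∈
          Subgroup.closure (cs.simple '' K) :=
        mul_mem (mul_mem (cs.wordProd_mem_closure hKω) (Subgroup.subset_closure ⟨k, hk, rfl⟩))
          (inv_mem (cs.wordProd_mem_closure hKω))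
      have h1 := hmin _ hmem
      have h2 : w * (cs.wordProd ω * cs.simple k * (cs.wordProd ω)⁻¹) =
          cs.wordProd (α.eraseIdx j) := by
        rw [← mul_assoc, ← mul_assoc, he]; group
      have h3 := cs.length_wordProd_le (α.eraseIdx j)
      rw [List.length_eraseIdx_of_lt hjα] at h3
      have h4 : cs.length w = α.length := by rw [hwα]; exact hα
      rw [h2] at h1
      omega
    · rw [List.eraseIdx_append_of_length_le hjα, wordProd_append, ← hwα, mul_assoc] at he
      have he' := mul_left_cancel he
      have h1 := hshort (ω.eraseIdx (j - α.length))
        (fun i hi => hKω i (List.mem_of_mem_eraseIdx hi))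
        (by rw [wordProd_append, wordProd_singleton, he'])
      have h2 := List.length_eraseIdx_le ω (j - α.length)
      simp only [List.length_append, List.length_singleton] at h1
      omega

theorem length_add_length_le_of_minimal {K : Set B} {w : W}
    (hmin : ∀ v ∈ Subgroup.closure (cs.simple '' K), cs.length w ≤ cs.length (w * v))
    {v : W} (hv : v ∈ Subgroup.closure (cs.simple '' K)) :
    cs.length w + cs.length v ≤ cs.length (w * v) := by
  classical
  have hex : ∃ n : ℕ, ∃ ω : List B,
      (∀ i ∈ ω, i ∈ K) ∧ cs.wordProd ω = v ∧ ω.length = n := by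
    obtain ⟨ω, h1, h2⟩ := cs.exists_word_of_mem_closure hv
    exact ⟨_, ω, h1, h2, rfl⟩
  obtain ⟨ω, hK, rfl, hn⟩ := Nat.find_spec hex
  rw [cs.length_mul_wordProd_of_minimal hmin ω hK fun ω' h1 h2 =>
    hn.trans_le (Nat.find_min' hex ⟨ω', h1, h2, rfl⟩)]
  exact Nat.add_le_add_left (cs.length_wordProd_le ω) _

/-- A homomorphism that sends simple reflections to simple reflections does not increase
lengths. -/
theorem length_map_le (σ : W →* W) (e : B → B)
    (hσ : ∀ i : B, σ (cs.simple i) = cs.simple (e i)) (u : W) :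
    cs.length (σ u) ≤ cs.length u := by
  obtain ⟨ω, hω, rfl⟩ := cs.exists_isReduced u
  have h : σ (cs.wordProd ω) = cs.wordProd (ω.map e) := by
    rw [wordProd, wordProd, map_list_prod, List.map_map, List.map_map]
    congr 1
    exact List.map_congr_left fun i _ => hσ i
  rw [h, hω.eq]
  simpa using cs.length_wordProd_le (ω.map e)

end CoxeterSystem


/-- Let `σ` be the automorphism of a Coxeter group induced by a diagram automorphism `e`,
let `J` be a set of simple indices and `u ∈ W_J`. If `w = u⁻¹ * σ(u)` is of minimal length
in its coset `w * W_{e(J)}`, then `w = 1`. -/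
theorem stmt_12 {B : Type*} {W : Type*} [Group W] {M : CoxeterMatrix B}
    (cs : CoxeterSystem M W) (e : B ≃ B) (he : ∀ i j : B, M (e i) (e j) = M i j)
    (σ : W ≃* W) (hσ : ∀ i : B, σ (cs.simple i) = cs.simple (e i))
    (J : Set B) (u : W) (hu : u ∈ Subgroup.closure (cs.simple '' J))
    (w : W) (hw : w = u⁻¹ * σ u)
    (hmin : ∀ v ∈ Subgroup.closure (cs.simple '' (e '' J)),
      cs.length w ≤ cs.length (w * v)) :
    w = 1 := by
  have hσu : σ u ∈ Subgroup.closure (cs.simple '' (e '' J)) := by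
    have h := Subgroup.mem_map_of_mem σ.toMonoidHom hu
    rw [MonoidHom.map_closure, Set.image_image] at h
    rw [Set.image_image]
    simpa [hσ] using h
  have h1 := cs.length_add_length_le_of_minimal hmin (inv_mem hσu)
  have h2 : w * (σ u)⁻¹ = u⁻¹ := by rw [hw]; group
  rw [h2, cs.length_inv, cs.length_inv] at h1
  have h3 : cs.length u ≤ cs.length (σ u) := by
    have h := cs.length_map_le σ.symm.toMonoidHom e.symm
      (fun i => by
        change σ.symm (cs.simple i) = _
        rw [MulEquiv.symm_apply_eq, hσ, Equiv.apply_symm_apply]) (σ u)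
    simpa using h
  exact cs.length_eq_zero_iff.mp (by omega)
end
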